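/- arXiv:2309.16766 — 3 statements merged into one kernel-verified Lean document; each statement's English description precedes it below -/
import Mathlib

section
/- Carlson's theorem (Banach-space-valued, exponential-ceiling bound): Let X be a complex Banach space and let f : ℂ → X be entire (complex-differentiable at every point of ℂ). Suppose there exist constants α, β > 0 such that for all z ∈ ℂ, ‖f(z)‖ ≤ α · exp(β · ⌈|Re z|⌉), where ⌈·⌉ denotes the ceiling of the real number |Re z|. If f(n) = 0 for every integer n, then f(z) = 0 for all z ∈ ℂ. -/
lemma car_normSq_sin (z : ℂ) : ‖Complex.sin z‖ ^ 2 = Real.sin z.re ^ 2 + Real.sinh z.im ^ 2 := by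
  rw [Complex.sin_eq, ← Complex.normSq_eq_norm_sq, ← Complex.ofReal_sin, ← Complex.ofReal_cos,
    ← Complex.ofReal_sinh, ← Complex.ofReal_cosh, ← Complex.ofReal_mul, ← Complex.ofReal_mul,
    Complex.normSq_add_mul_I, mul_pow, mul_pow, Real.cosh_sq, Real.cos_sq']
  ring

lemma car_sin_lower (z : ℂ) (hz : |z.re| ≤ 1 / 2) : 2 * ‖z‖ ≤ ‖Complex.sin (Real.pi * z)‖ := by
  have hpi := Real.pi_gt_three
  apply le_of_sq_le_sq _ (norm_nonneg _)
  rw [car_normSq_sin, mul_pow, ← Complex.normSq_eq_norm_sq, Complex.normSq_apply]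
  have e1 : ((Real.pi : ℂ) * z).re = Real.pi * z.re := by simp
  have e2 : ((Real.pi : ℂ) * z).im = Real.pi * z.im := by simp
  rw [e1, e2]
  have h1 : 2 * |z.re| ≤ |Real.sin (Real.pi * z.re)| := by
    have := Real.mul_abs_le_abs_sin (x := Real.pi * z.re) (by
      rw [abs_mul, abs_of_pos Real.pi_pos]; nlinarith)
    rw [abs_mul, abs_of_pos Real.pi_pos] at this
    calc _ = 2 / Real.pi * (Real.pi * |z.re|) := by field_simp
      _ ≤ _ := this
  have h2 : 2 * |z.im| ≤ |Real.sinh (Real.pi * z.im)| := by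
    rw [Real.abs_sinh]
    have := Real.self_le_sinh_iff.2 (abs_nonneg (Real.pi * z.im))
    refine le_trans ?_ this
    rw [abs_mul, abs_of_pos Real.pi_pos]
    nlinarith [abs_nonneg z.im]
  have h1' := pow_le_pow_left₀ (by positivity) h1 2
  have h2' := pow_le_pow_left₀ (by positivity) h2 2
  rw [mul_pow, sq_abs, sq_abs] at h1' h2'
  nlinarith

lemma car_sin_period (z : ℂ) (n : ℤ) :
    ‖Complex.sin (Real.pi * z)‖ = ‖Complex.sin (Real.pi * (z - n))‖ := by
  have : (Real.pi : ℂ) * (z - n) = Real.pi * z - n * Real.pi := by ring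
  rw [this, Complex.sin_antiperiodic.sub_int_mul_eq]
  simp

lemma car_sin_lower_int (z : ℂ) (n : ℤ) (hz : |z.re - n| ≤ 1 / 2) :
    2 * ‖z - n‖ ≤ ‖Complex.sin (Real.pi * z)‖ := by
  rw [car_sin_period z n]
  exact car_sin_lower _ (by simpa using hz)

lemma car_sin_zero (z : ℂ) (h : Complex.sin (Real.pi * z) = 0) : ∃ n : ℤ, z = n := by
  obtain ⟨k, hk⟩ := Complex.sin_eq_zero_iff.1 h
  refine ⟨k, ?_⟩
  have hp : (Real.pi : ℂ) ≠ 0 := by exact_mod_cast Real.pi_ne_zero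
  apply mul_left_cancel₀ hp
  rw [hk]; ring

noncomputable def carG {X : Type*} [NormedAddCommGroup X] [NormedSpace ℂ X]
    (f : ℂ → X) (z : ℂ) : X :=
  open Classical in
  if Complex.sin (Real.pi * z) = 0 then
    (deriv (fun w : ℂ => Complex.sin (Real.pi * w)) z)⁻¹ • deriv f z
  else (Complex.sin (Real.pi * z))⁻¹ • f z

lemma carG_diff {X : Type*} [NormedAddCommGroup X] [NormedSpace ℂ X] [CompleteSpace X]
    (f : ℂ → X) (hf : Differentiable ℂ f) (hzero : ∀ n : ℤ, f (n : ℂ) = 0) :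
    Differentiable ℂ (carG f) := by
  have hs : Differentiable ℂ (fun w : ℂ => Complex.sin (Real.pi * w)) := by fun_prop
  intro z
  by_cases h : Complex.sin (Real.pi * z) = 0
  · obtain ⟨n, rfl⟩ := car_sin_zero z h
    have hne : deriv (fun w : ℂ => Complex.sin (Real.pi * w)) n ≠ 0 := by
      have hd : HasDerivAt (fun w : ℂ => Complex.sin (Real.pi * w))
          (Complex.cos (Real.pi * n) * (Real.pi * 1)) n :=
        ((hasDerivAt_id (n : ℂ)).const_mul (Real.pi : ℂ)).csin
      rw [hd.deriv]
      have hp : (Real.pi : ℂ) ≠ 0 := by exact_mod_cast Real.pi_ne_zero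
      have hc : Complex.cos (Real.pi * n) ≠ 0 := by
        intro hc
        have := Complex.sin_sq_add_cos_sq (Real.pi * n)
        rw [h, hc] at this
        norm_num at this
      simpa [hp] using hc
    have d1 : DifferentiableAt ℂ (dslope f n) n :=
      ((Complex.differentiableOn_dslope (s := Set.univ) Filter.univ_mem).2
        hf.differentiableOn).differentiableAt Filter.univ_mem
    have d2 : DifferentiableAt ℂ (dslope (fun w : ℂ => Complex.sin (Real.pi * w)) n) n :=
      ((Complex.differentiableOn_dslope (s := Set.univ) Filter.univ_mem).2
        hs.differentiableOn).differentiableAt Filter.univ_mem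
    have d3 : DifferentiableAt ℂ (fun z => (dslope (fun w : ℂ => Complex.sin (Real.pi * w)) n z)⁻¹
        • dslope f n z) n := (d2.inv (by rwa [dslope_same])).smul d1
    refine d3.congr_of_eventuallyEq ?_
    filter_upwards [Metric.ball_mem_nhds (n : ℂ) one_pos] with w hw
    by_cases hwn : w = n
    · subst hwn
      simp only [carG, h, if_true, dslope_same]
    · have hw0 : Complex.sin (Real.pi * w) ≠ 0 := by
        intro h0
        obtain ⟨m, rfl⟩ := car_sin_zero w h0
        rw [Metric.mem_ball, Complex.dist_eq] at hw
        have : ‖((m - n : ℤ) : ℂ)‖ < 1 := by push_cast; exact hw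
        rw [Complex.norm_intCast] at this
        have h3 : |m - n| < 1 := by exact_mod_cast this
        rw [Int.abs_lt_one_iff] at h3
        exact hwn (by rw [sub_eq_zero.1 h3])
      have hsub : w - n ≠ 0 := sub_ne_zero.2 hwn
      simp only [carG, hw0, if_false]
      rw [dslope_of_ne _ hwn, dslope_of_ne _ hwn, slope_def_module, slope_def_module, h, hzero n,
        sub_zero, sub_zero, smul_smul]
      congr 1
      rw [smul_eq_mul]
      field_simp
  · have d3 : DifferentiableAt ℂ (fun z => (Complex.sin (Real.pi * z))⁻¹ • f z) z :=
      ((hs z).inv h).smul (hf z)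
    refine d3.congr_of_eventuallyEq ?_
    filter_upwards [hs.continuous.continuousAt.eventually_ne h] with w hw
    simp only [carG, hw, if_false]

lemma carG_bound_aux {X : Type*} [NormedAddCommGroup X] [NormedSpace ℂ X]
    (f : ℂ → X) (C : ℝ) (z : ℂ) (hC : ‖f z‖ ≤ C)
    (h : 1 ≤ ‖Complex.sin (Real.pi * z)‖) : ‖carG f z‖ ≤ C := by
  have h0 : Complex.sin (Real.pi * z) ≠ 0 := by
    intro h0; rw [h0, norm_zero] at h; linarith
  simp only [carG, h0, if_false]
  rw [norm_smul, norm_inv]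
  have := inv_le_one_of_one_le₀ h
  nlinarith [norm_nonneg (f z)]

lemma carG_bound {X : Type*} [NormedAddCommGroup X] [NormedSpace ℂ X] [CompleteSpace X]
    (f : ℂ → X) (hf : Differentiable ℂ f) (hzero : ∀ n : ℤ, f (n : ℂ) = 0)
    (α β : ℝ) (hα : 0 < α) (hβ : 0 < β)
    (hb : ∀ z : ℂ, ‖f z‖ ≤ α * Real.exp (β * (|z.re| + 1))) (z : ℂ) :
    ‖carG f z‖ ≤ α * Real.exp (β * (|z.re| + 2)) := by
  have hr := abs_sub_round z.re
  by_cases h : 1 / 2 ≤ ‖z - round z.re‖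
  · apply carG_bound_aux
    · refine (hb z).trans ?_
      gcongr; norm_num
    · have := car_sin_lower_int z (round z.re) hr
      linarith
  · push Not at h
    refine Complex.norm_le_of_forall_mem_frontier_norm_le
      (U := Metric.ball (round z.re : ℂ) (1 / 2)) Metric.isBounded_ball
      (carG_diff f hf hzero).diffContOnCl ?_ (subset_closure (by
        rw [Metric.mem_ball, Complex.dist_eq]; exact h))
    intro w hw
    rw [frontier_ball _ (by norm_num), mem_sphere_iff_norm] at hw
    have hw1 : |w.re - (round z.re : ℤ)| ≤ 1 / 2 := by
      have := Complex.abs_re_le_norm (w - round z.re)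
      rw [hw] at this
      simpa using this
    apply carG_bound_aux
    · refine (hb w).trans ?_
      have : |w.re| ≤ |z.re| + 1 := by
        rw [abs_le] at *
        constructor <;> cases abs_cases z.re <;> linarith [hr.1, hr.2, hw1.1, hw1.2]
      gcongr α * Real.exp (β * ?_)
      linarith
    · have := car_sin_lower_int w (round z.re) hw1
      linarith

lemma carG_imag {X : Type*} [NormedAddCommGroup X] [NormedSpace ℂ X]
    (f : ℂ → X) (C : ℝ) (hC : ∀ y : ℝ, ‖f (y * Complex.I)‖ ≤ C) (y : ℝ) (hy : 1 / 2 ≤ |y|) :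
    ‖carG f (y * Complex.I)‖ ≤ 4 * C * Real.exp (-(Real.pi * |y|)) := by
  have h1 : ‖Complex.sin (Real.pi * (y * Complex.I))‖ = Real.sinh (Real.pi * |y|) := by
    have := car_normSq_sin (Real.pi * (y * Complex.I))
    simp only [Complex.mul_re, Complex.mul_im, Complex.ofReal_re, Complex.ofReal_im, Complex.I_re,
      Complex.I_im, mul_zero, mul_one, zero_mul, sub_zero, add_zero, zero_add, Real.sin_zero] at this
    rw [← sq_abs (Real.sinh _), Real.abs_sinh, abs_mul, abs_of_pos Real.pi_pos] at this
    have h2 : 0 ≤ Real.sinh (Real.pi * |y|) := Real.sinh_nonneg_iff.2 (by positivity)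
    rw [← abs_of_nonneg h2, ← abs_of_nonneg (norm_nonneg _), ← sq_eq_sq_iff_abs_eq_abs, this]
    ring
  have hpi := Real.pi_gt_three
  have ht : 1 ≤ Real.pi * |y| := by nlinarith
  generalize Real.pi * |y| = t at *
  have h3 : Real.exp t / 4 ≤ Real.sinh t := by
    rw [Real.sinh_eq]
    have := Real.add_one_le_exp t
    have : Real.exp (-t) ≤ 1 := Real.exp_le_one_iff.2 (by linarith)
    linarith
  have h4 := Real.exp_pos t
  have h0 : Complex.sin (Real.pi * (y * Complex.I)) ≠ 0 := by
    rw [← norm_pos_iff, h1]; linarith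
  simp only [carG, h0, if_false]
  rw [norm_smul, norm_inv, h1, Real.exp_neg]
  calc (Real.sinh t)⁻¹ * ‖f (y * Complex.I)‖ ≤ (Real.exp t / 4)⁻¹ * C := by
        gcongr
        exact hC y
    _ = _ := by field_simp

noncomputable def carK (z : ℂ) : ℂ := Complex.exp (-2 * z * Complex.log (1 + z))

lemma carK_norm (z : ℂ) (hz : 0 ≤ z.re) :
    ‖carK z‖ ≤ Real.exp (Real.pi * |z.im|) := by
  rw [carK, Complex.norm_exp]
  apply Real.exp_le_exp.2
  have e : (-2 * z * Complex.log (1 + z)).re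
      = -2 * (z.re * Real.log ‖1 + z‖) + 2 * (z.im * Complex.arg (1 + z)) := by
    simp [Complex.mul_re, Complex.mul_im, Complex.log_re, Complex.log_im]
    ring
  have h1 : 0 ≤ Real.log ‖1 + z‖ := by
    apply Real.log_nonneg
    have := Complex.re_le_norm (1 + z)
    simp at this; linarith
  have h2 : |Complex.arg (1 + z)| ≤ Real.pi / 2 :=
    Complex.abs_arg_le_pi_div_two_iff.2 (by simp; linarith)
  have h3 : z.im * Complex.arg (1 + z) ≤ |z.im| * (Real.pi / 2) := by
    refine (le_abs_self _).trans ?_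
    rw [abs_mul]; gcongr
  rw [e]
  have := mul_nonneg hz h1
  linarith

lemma carK_real (x : ℝ) (hx : 0 ≤ x) : ‖carK x‖ = Real.exp (-2 * x * Real.log (1 + x)) := by
  rw [carK, Complex.norm_exp]
  have : (1 + (x : ℂ)) = ((1 + x : ℝ) : ℂ) := by simp
  rw [this, ← Complex.ofReal_log (by linarith)]
  congr 1
  simp

lemma carK_diff (z : ℂ) (hz : 0 ≤ z.re) : DifferentiableAt ℂ carK z := by
  have : 1 + z ∈ Complex.slitPlane := Or.inl (by simp; linarith)
  unfold carK
  fun_prop (disch := assumption)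

open Filter Topology in
lemma car_half {X : Type*} [NormedAddCommGroup X] [NormedSpace ℂ X] [CompleteSpace X]
    (f : ℂ → X) (hf : Differentiable ℂ f) (hzero : ∀ n : ℤ, f (n : ℂ) = 0)
    (α β : ℝ) (hα : 0 < α) (hβ : 0 < β)
    (hb : ∀ z : ℂ, ‖f z‖ ≤ α * Real.exp (β * (|z.re| + 1))) (z : ℂ) (hz : 0 ≤ z.re) :
    f z = 0 := by
  have hG := carG_diff f hf hzero
  have hGb := carG_bound f hf hzero α β hα hβ hb
  have key : Set.EqOn (fun z => carK z • carG f z) 0 {z : ℂ | 0 ≤ z.re} := by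
    apply PhragmenLindelof.eq_zero_on_right_half_plane_of_superexponential_decay
    · have hd : ∀ z : ℂ, 0 ≤ z.re → DifferentiableAt ℂ (fun z => carK z • carG f z) z :=
        fun z hz => (carK_diff z hz).smul (hG z)
      refine ⟨fun z hz => (hd z (le_of_lt hz)).differentiableWithinAt, fun z hz => ?_⟩
      rw [Complex.closure_setOfPred_lt_re] at hz
      exact (hd z hz).continuousAt.continuousWithinAt
    · refine ⟨1, by norm_num, Real.pi + β, ?_⟩
      refine Asymptotics.IsBigO.of_bound (α * Real.exp (β * 2)) ?_
      refine eventually_inf_principal.2 (Eventually.of_forall fun z hz => ?_)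
      have hz : 0 < z.re := hz
      rw [norm_smul, Real.rpow_one, Real.norm_of_nonneg (Real.exp_pos _).le]
      calc _ ≤ Real.exp (Real.pi * |z.im|) * (α * Real.exp (β * (|z.re| + 2))) :=
            mul_le_mul (carK_norm z hz.le) (hGb z) (norm_nonneg _) (Real.exp_pos _).le
        _ ≤ Real.exp (Real.pi * ‖z‖) * (α * Real.exp (β * (‖z‖ + 2))) := by
            have := Complex.abs_im_le_norm z
            have := Complex.abs_re_le_norm z
            have := Real.pi_pos
            gcongr
        _ = _ := by
            rw [mul_add β, add_mul, Real.exp_add, Real.exp_add]; ring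
    · intro n
      have ht : Tendsto (fun x : ℝ => α * Real.exp (β * 2) * Real.exp (-x)) atTop (𝓝 0) := by
        simpa using (Real.tendsto_exp_neg_atTop_nhds_zero.const_mul (α * Real.exp (β * 2)))
      refine squeeze_zero' (Eventually.of_forall fun x => by positivity) ?_ ht
      have hl : Tendsto (fun x : ℝ => Real.log (1 + x)) atTop atTop :=
        Real.tendsto_log_atTop.comp (tendsto_atTop_add_const_left _ _ tendsto_id)
      filter_upwards [hl.eventually_ge_atTop (n + β + 1), eventually_ge_atTop 0] with x h1 h2
      rw [norm_smul, carK_real x h2]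
      have := hGb x
      rw [Complex.ofReal_re, abs_of_nonneg h2] at this
      calc _ ≤ Real.exp x ^ n * (Real.exp (-2 * x * Real.log (1 + x)) *
              (α * Real.exp (β * (x + 2)))) := by gcongr
        _ = α * Real.exp (β * 2) * Real.exp (n * x + -2 * x * Real.log (1 + x) + β * x) := by
            rw [mul_add β, Real.exp_add, Real.exp_add, Real.exp_add, ← Real.exp_nat_mul]; ring
        _ ≤ _ := by
            gcongr
            have : 0 ≤ (n : ℝ) + β + 1 := by positivity
            nlinarith [mul_le_mul_of_nonneg_left h1 h2, mul_nonneg h2 this]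
    · have hC : ∀ y : ℝ, ‖f (y * Complex.I)‖ ≤ α * Real.exp β := fun y => by
        simpa using hb (y * Complex.I)
      refine ⟨max (4 * (α * Real.exp β)) (Real.exp Real.pi * (α * Real.exp (β * 2))), fun y => ?_⟩
      have hk := carK_norm (y * Complex.I) (by simp)
      have e : ((y : ℂ) * Complex.I).im = y := by simp
      rw [e] at hk
      rw [norm_smul]
      by_cases hy : 1 / 2 ≤ |y|
      · apply le_max_of_le_left
        calc _ ≤ Real.exp (Real.pi * |y|) *
              (4 * (α * Real.exp β) * Real.exp (-(Real.pi * |y|))) :=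
              mul_le_mul hk (carG_imag f _ hC y hy) (norm_nonneg _) (Real.exp_pos _).le
          _ = _ := by
              rw [Real.exp_neg]
              field_simp
      · apply le_max_of_le_right
        have hg := hGb (y * Complex.I)
        have e : ((y : ℂ) * Complex.I).re = 0 := by simp
        rw [e, abs_zero, zero_add] at hg
        refine mul_le_mul (hk.trans ?_) hg (norm_nonneg _) (Real.exp_pos _).le
        apply Real.exp_le_exp.2
        have := Real.pi_pos
        nlinarith
  have h1 := key hz
  simp only [Pi.zero_apply, smul_eq_zero] at h1
  have h2 : carG f z = 0 := h1.resolve_left (Complex.exp_ne_zero _)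
  by_cases h : Complex.sin (Real.pi * z) = 0
  · obtain ⟨n, rfl⟩ := car_sin_zero z h
    exact hzero n
  · simp only [carG, h, if_false, smul_eq_zero, inv_eq_zero, false_or] at h2
    exact h2

/-- **Carlson's theorem** (Banach-space-valued, exponential-ceiling bound).
Let `f : ℂ → X` be entire with `‖f z‖ ≤ α · exp (β · ⌈|Re z|⌉)` for some constants
`α, β > 0`. If `f` vanishes at every integer, then `f` vanishes identically. -/
theorem carlson_entire
    {X : Type*} [NormedAddCommGroup X] [NormedSpace ℂ X] [CompleteSpace X]
    (f : ℂ → X) (hf : Differentiable ℂ f)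
    (α β : ℝ) (hα : 0 < α) (hβ : 0 < β)
    (hbound : ∀ z : ℂ, ‖f z‖ ≤ α * Real.exp (β * (⌈|z.re|⌉ : ℝ)))
    (hzero : ∀ n : ℤ, f (n : ℂ) = 0) :
    ∀ z : ℂ, f z = 0 := by
  have hb : ∀ z : ℂ, ‖f z‖ ≤ α * Real.exp (β * (|z.re| + 1)) := fun z => by
    refine (hbound z).trans ?_
    have := (Int.ceil_lt_add_one |z.re|).le
    gcongr
  intro z
  rcases le_total 0 z.re with h | h
  · exact car_half f hf hzero α β hα hβ hb z h
  · have := car_half (fun z => f (-z)) (hf.comp differentiable_neg)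
      (fun n => by simpa using hzero (-n)) α β hα hβ (fun z => by simpa using hb (-z)) (-z)
      (by simpa using h)
    simpa using this
end

section
/- Carlson's theorem (right half-plane version): Let X be a complex Banach space and let f : ℂ → X be continuous on the closed right half-plane {z : Re z ≥ 0} and complex-differentiable on the open right half-plane {z : Re z > 0}. Suppose there exist constants α, β > 0 such that ‖f(z)‖ ≤ α · exp(β · ⌈Re z⌉) for all z with Re z ≥ 0, where ⌈·⌉ denotes the ceiling. If f(n) = 0 for every nonnegative integer n, then f(z) = 0 for all z with Re z ≥ 0. -/
open Filter Topology Bornology in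
lemma carlson_step {X : Type*} [NormedAddCommGroup X] [NormedSpace ℂ X] [CompleteSpace X]
    (g : ℂ → X) (hg : DiffContOnCl ℂ g {z : ℂ | 0 < z.re}) (M : ℝ)
    (hM : ∀ z : ℂ, 0 ≤ z.re → ‖g z‖ ≤ M) (k : ℝ) (hk : 0 < k) (hgk : g k = 0) :
    ∃ h : ℂ → X, DiffContOnCl ℂ h {z : ℂ | 0 < z.re} ∧ (∀ z : ℂ, 0 ≤ z.re → ‖h z‖ ≤ M) ∧
      ∀ z : ℂ, 0 ≤ z.re → g z = ((z - k) / (z + k)) • h z := by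
  have hM0 : 0 ≤ M := (norm_nonneg _).trans (hM 0 (by simp))
  have hopen : IsOpen {z : ℂ | 0 < z.re} := isOpen_lt continuous_const Complex.continuous_re
  have hnhds : {z : ℂ | 0 < z.re} ∈ 𝓝 (k : ℂ) := hopen.mem_nhds (by simpa using hk)
  have hd : DiffContOnCl ℂ (dslope g k) {z : ℂ | 0 < z.re} := by
    refine ⟨(Complex.differentiableOn_dslope hnhds).2 hg.differentiableOn, ?_⟩
    exact (continuousOn_dslope (mem_of_superset hnhds subset_closure)).2
      ⟨hg.continuousOn, hg.differentiableAt hopen (by simpa using hk)⟩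
  have hh : DiffContOnCl ℂ (fun z : ℂ => (z + k) • dslope g k z) {z : ℂ | 0 < z.re} := by
    have h1 : DiffContOnCl ℂ (fun z : ℂ => z + k) {z : ℂ | 0 < z.re} :=
      (differentiable_id.add_const _).diffContOnCl
    exact h1.smul hd
  have hne : ∀ z : ℂ, 0 ≤ z.re → z + k ≠ 0 := by
    intro z hz h0
    have := congrArg Complex.re h0
    simp at this
    linarith
  have hsl : ∀ z : ℂ, (z - k) • dslope g k z = g z := by
    intro z
    have := sub_smul_dslope g (k : ℂ) z
    rw [this, hgk, sub_zero]
  have hbig : ∀ z : ℂ, 0 ≤ z.re → 3 * k ≤ ‖z‖ → ‖(z + k) • dslope g k z‖ ≤ 2 * M := by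
    intro z hz hzk
    have hkn : ‖(k : ℂ)‖ = k := by simp [abs_of_pos hk]
    have h1 : ‖z + k‖ ≤ ‖z‖ + k := by simpa [hkn, abs_of_pos hk] using norm_add_le z (k : ℂ)
    have h2 : ‖z‖ - k ≤ ‖z - k‖ := by
      simpa [hkn, abs_of_pos hk] using norm_sub_norm_le z (k : ℂ)
    calc ‖(z + k) • dslope g k z‖ = ‖z + k‖ * ‖dslope g k z‖ := norm_smul _ _
      _ ≤ (2 * ‖z - k‖) * ‖dslope g k z‖ := by gcongr; linarith
      _ = 2 * ‖(z - k) • dslope g k z‖ := by rw [norm_smul]; ring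
      _ ≤ 2 * M := by rw [hsl]; gcongr; exact hM z hz
  refine ⟨_, hh, ?_, ?_⟩
  · intro z hz
    refine PhragmenLindelof.right_half_plane_of_bounded_on_real hh ?_ ?_ ?_ hz
    · refine ⟨1, by norm_num, 0, ?_⟩
      refine Asymptotics.IsBigO.of_bound (2 * M) ?_
      have h1 : ∀ᶠ z : ℂ in cobounded ℂ ⊓ 𝓟 {z : ℂ | 0 < z.re}, 3 * k ≤ ‖z‖ :=
        (eventually_cobounded_le_norm (3 * k)).filter_mono inf_le_left
      have h2 : ∀ᶠ z : ℂ in cobounded ℂ ⊓ 𝓟 {z : ℂ | 0 < z.re}, 0 < z.re :=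
        (eventually_principal.2 (fun x hx => hx)).filter_mono inf_le_right
      filter_upwards [h1, h2] with z hz1 hz2
      simpa using! hbig z hz2.le hz1
    · refine ⟨2 * M, ?_⟩
      rw [eventually_map]
      filter_upwards [eventually_ge_atTop (3 * k)] with x hx
      have hx0 : 0 ≤ x := by linarith
      refine hbig x (by simpa using hx0) ?_
      simpa [abs_of_nonneg hx0] using hx
    · intro y
      have : ‖(y * Complex.I : ℂ) + k‖ = ‖(y * Complex.I : ℂ) - k‖ := by
        rw [Complex.norm_def, Complex.norm_def]
        simp [Complex.normSq_apply]
      rw [norm_smul, this, ← norm_smul, hsl]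
      exact hM _ (by simp)
  · intro z hz
    rw [smul_smul, div_mul_cancel₀ _ (hne z hz), hsl]

lemma carlson_iter {X : Type*} [NormedAddCommGroup X] [NormedSpace ℂ X] [CompleteSpace X]
    (g : ℂ → X) (hg : DiffContOnCl ℂ g {z : ℂ | 0 < z.re}) (M : ℝ)
    (hM : ∀ z : ℂ, 0 ≤ z.re → ‖g z‖ ≤ M) (hg0 : ∀ n : ℕ, g n = 0) (N : ℕ) :
    ∃ h : ℂ → X, DiffContOnCl ℂ h {z : ℂ | 0 < z.re} ∧ (∀ z : ℂ, 0 ≤ z.re → ‖h z‖ ≤ M) ∧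
      (∀ n : ℕ, N < n → h n = 0) ∧
      ∀ z : ℂ, 0 ≤ z.re → ‖g z‖ =
        (∏ k ∈ Finset.range N, ‖(z - ((k + 1 : ℝ) : ℂ)) / (z + ((k + 1 : ℝ) : ℂ))‖) * ‖h z‖ := by
  induction N with
  | zero => exact ⟨g, hg, hM, fun n _ => hg0 n, by simp⟩
  | succ N ih =>
    obtain ⟨h, h1, h2, h3, h4⟩ := ih
    have hz : h (((N : ℝ) + 1 : ℝ) : ℂ) = 0 := by
      have := h3 (N + 1) (Nat.lt_succ_self N)
      push_cast at this ⊢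
      exact this
    obtain ⟨h', a1, a2, a3⟩ := carlson_step h h1 M h2 ((N : ℝ) + 1) (by positivity) hz
    refine ⟨h', a1, a2, ?_, ?_⟩
    · intro n hn
      have e := a3 (n : ℂ) (by simp)
      rw [h3 n (by omega)] at e
      refine (smul_eq_zero.1 e.symm).resolve_left ?_
      refine div_ne_zero ?_ ?_
      · intro h0
        have h0' : (n : ℂ) = ((N + 1 : ℕ) : ℂ) := by
          push_cast at h0 ⊢
          exact sub_eq_zero.1 h0
        have := Nat.cast_injective h0'
        omega
      · have : (n : ℂ) + ((N + 1 : ℝ) : ℂ) = ((n + (N + 1) : ℕ) : ℂ) := by push_cast; ring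
        rw [this]
        exact_mod_cast (by omega : n + (N + 1) ≠ 0)
    · intro z hz
      rw [h4 z hz, a3 z hz, norm_smul, Finset.prod_range_succ, mul_assoc]

lemma carlson_factor (z : ℂ) (hz : 0 < z.re) (k : ℝ) (hk : 1 ≤ k) :
    ‖(z - (k : ℂ)) / (z + (k : ℂ))‖ ^ 2 ≤
      Real.exp (-(4 * z.re / (‖z‖ + 1) ^ 2 * (1 / k))) := by
  have hpos : 0 < ‖z + (k : ℂ)‖ ^ 2 := by
    have : z + (k : ℂ) ≠ 0 := by
      intro h0
      have := congrArg Complex.re h0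
      simp at this
      linarith
    positivity
  have e : ‖(z - (k : ℂ)) / (z + (k : ℂ))‖ ^ 2 = 1 - 4 * z.re * k / ‖z + (k : ℂ)‖ ^ 2 := by
    rw [norm_div, div_pow, eq_sub_iff_add_eq, ← add_div, div_eq_one_iff_eq hpos.ne',
      Complex.sq_norm, Complex.sq_norm, Complex.normSq_apply, Complex.normSq_apply]
    simp
    ring
  have hle : 4 * z.re / (‖z‖ + 1) ^ 2 * (1 / k) ≤ 4 * z.re * k / ‖z + (k : ℂ)‖ ^ 2 := by
    have h1 : ‖z + k‖ ≤ (‖z‖ + 1) * k := by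
      have := norm_add_le z (k : ℂ)
      have hkn : ‖(k : ℂ)‖ = k := by
        rw [Complex.norm_real, Real.norm_eq_abs, abs_of_nonneg (by linarith)]
      rw [hkn] at this
      nlinarith [norm_nonneg z]
    calc 4 * z.re / (‖z‖ + 1) ^ 2 * (1 / k) = 4 * z.re * k / ((‖z‖ + 1) * k) ^ 2 := by
          have : 0 < ‖z‖ + 1 := by positivity
          have : 0 < k := by linarith
          field_simp
      _ ≤ _ := by gcongr
  rw [e]
  have := Real.add_one_le_exp (-(4 * z.re / (‖z‖ + 1) ^ 2 * (1 / k)))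
  linarith

open Filter Topology in
lemma carlson_bdd {X : Type*} [NormedAddCommGroup X] [NormedSpace ℂ X] [CompleteSpace X]
    (g : ℂ → X) (hg : DiffContOnCl ℂ g {z : ℂ | 0 < z.re}) (M : ℝ)
    (hM : ∀ z : ℂ, 0 ≤ z.re → ‖g z‖ ≤ M) (hg0 : ∀ n : ℕ, g n = 0) (z : ℂ) (hz : 0 < z.re) :
    g z = 0 := by
  set c := 4 * z.re / (‖z‖ + 1) ^ 2 with hc
  have hcpos : 0 < c := by positivity
  have key : ∀ N : ℕ, ‖g z‖ ^ 2 ≤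
      Real.exp (-(c * ∑ k ∈ Finset.range N, 1 / ((k : ℝ) + 1))) * M ^ 2 := by
    intro N
    obtain ⟨h, -, h2, -, h4⟩ := carlson_iter g hg M hM hg0 N
    rw [h4 z hz.le, mul_pow, ← Finset.prod_pow, Finset.mul_sum, ← Finset.sum_neg_distrib,
      Real.exp_sum]
    gcongr with k hk
    · exact carlson_factor z hz (k + 1) (by simp)
    · exact h2 z hz.le
  have hlim : Tendsto (fun N : ℕ =>
      Real.exp (-(c * ∑ k ∈ Finset.range N, 1 / ((k : ℝ) + 1))) * M ^ 2) atTop (𝓝 (0 * M ^ 2)) := by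
    refine Tendsto.mul_const _ ?_
    refine Real.tendsto_exp_neg_atTop_nhds_zero.comp ?_
    exact Real.tendsto_sum_range_one_div_nat_succ_atTop.const_mul_atTop hcpos
  have h0 := ge_of_tendsto' hlim key
  rw [zero_mul] at h0
  have : ‖g z‖ = 0 := by
    have := norm_nonneg (g z)
    nlinarith
  exact norm_eq_zero.1 this

/-- **Carlson's theorem** (right half-plane version).
Let `f : ℂ → X` be continuous on the closed right half-plane, holomorphic on the open
right half-plane, and satisfy `‖f z‖ ≤ α · exp (β · ⌈Re z⌉)` there, for some `α, β > 0`.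
If `f` vanishes at every nonnegative integer, then `f` vanishes on the whole closed
right half-plane. -/
theorem carlson_half_plane
    {X : Type*} [NormedAddCommGroup X] [NormedSpace ℂ X] [CompleteSpace X]
    (f : ℂ → X)
    (hcont : ContinuousOn f {z : ℂ | 0 ≤ z.re})
    (hdiff : DifferentiableOn ℂ f {z : ℂ | 0 < z.re})
    (α β : ℝ) (hα : 0 < α) (hβ : 0 < β)
    (hbound : ∀ z : ℂ, 0 ≤ z.re → ‖f z‖ ≤ α * Real.exp (β * (⌈z.re⌉ : ℝ)))
    (hzero : ∀ n : ℕ, f (n : ℂ) = 0) :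
    ∀ z : ℂ, 0 ≤ z.re → f z = 0 := by
  have hcl : closure {z : ℂ | 0 < z.re} = {z : ℂ | 0 ≤ z.re} := Complex.closure_setOfPred_lt_re 0
  have hf : DiffContOnCl ℂ f {z : ℂ | 0 < z.re} := ⟨hdiff, by rw [hcl]; exact hcont⟩
  have hE : DiffContOnCl ℂ (fun z : ℂ => Complex.exp (-(β * z))) {z : ℂ | 0 < z.re} :=
    Differentiable.diffContOnCl (by fun_prop)
  have hopen : ∀ z : ℂ, 0 < z.re → f z = 0 := by
    intro z hz
    have := carlson_bdd (fun z : ℂ => Complex.exp (-(β * z)) • f z) (hE.smul hf)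
      (α * Real.exp β) ?_ (fun n => by simp [hzero n]) z hz
    · exact (smul_eq_zero.1 this).resolve_left (Complex.exp_ne_zero _)
    · intro w hw
      have h1 : (⌈w.re⌉ : ℝ) ≤ w.re + 1 := (Int.ceil_lt_add_one _).le
      rw [norm_smul, Complex.norm_exp]
      have e : (-((β : ℂ) * w)).re = -(β * w.re) := by simp
      rw [e]
      calc Real.exp (-(β * w.re)) * ‖f w‖
          ≤ Real.exp (-(β * w.re)) * (α * Real.exp (β * (w.re + 1))) := by
            gcongr
            exact (hbound w hw).trans (by gcongr)
        _ = α * Real.exp β := by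
            rw [mul_left_comm, ← Real.exp_add]
            congr 2
            ring
  have : Set.EqOn f (fun _ => 0) {z : ℂ | 0 ≤ z.re} :=
    Set.EqOn.of_subset_closure (s := {z : ℂ | 0 < z.re}) hopen hcont continuousOn_const
      (fun z (hz : 0 < z.re) => hz.le) hcl.ge
  exact this
end

section
/- Let X be a complex Banach space and let h : ℂ → X be continuous on the closed right half-plane {z : Re z ≥ 0} and complex-differentiable on the open right half-plane {z : Re z > 0}. Suppose there is a constant γ ≥ 0 such that ‖h(z)‖ ≤ γ · exp(−π |Im z|) for all z with Re z ≥ 0. Then h(z) = 0 for all z with Re z ≥ 0. -/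
open Filter Asymptotics Bornology in
/-- A function continuous on the closed right half-plane, holomorphic on the open right
half-plane, and decaying like `γ · exp (-π |Im z|)` there, vanishes identically on the
closed right half-plane. -/
theorem eq_zero_of_exp_decay_half_plane
    {X : Type*} [NormedAddCommGroup X] [NormedSpace ℂ X] [CompleteSpace X]
    (h : ℂ → X)
    (hcont : ContinuousOn h {z : ℂ | 0 ≤ z.re})
    (hdiff : DifferentiableOn ℂ h {z : ℂ | 0 < z.re})
    (γ : ℝ) (hγ : 0 ≤ γ)
    (hbound : ∀ z : ℂ, 0 ≤ z.re → ‖h z‖ ≤ γ * Real.exp (-Real.pi * |z.im|)) :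
    ∀ z : ℂ, 0 ≤ z.re → h z = 0 := by
  set e : ℂ → ℂ := fun z => Complex.exp (-2 * ((z + 1) * Complex.log (z + 1))) with he
  have hslit : ∀ z : ℂ, 0 ≤ z.re → z + 1 ∈ Complex.slitPlane := by
    intro z hz
    left
    simp
    linarith
  have hed : ∀ z : ℂ, 0 ≤ z.re → DifferentiableAt ℂ e z := by
    intro z hz
    have h1 : DifferentiableAt ℂ (fun z : ℂ => z + 1) z := by fun_prop
    have := h1.clog (hslit z hz)
    exact ((h1.mul this).const_mul (-2)).cexp
  have hre : ∀ z : ℂ, 0 ≤ z.re →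
      ‖e z • h z‖ ≤ γ * Real.exp (-2 * ((z.re + 1) * Real.log ‖z + 1‖)) := by
    intro z hz
    rw [norm_smul, he]
    simp only [Complex.norm_exp]
    have harg : |(z+1).arg| ≤ Real.pi / 2 := by
      rw [Complex.abs_arg_le_pi_div_two_iff]
      simp
      linarith
    have h2 : z.im * (z+1).arg ≤ |z.im| * (Real.pi / 2) := by
      calc _ ≤ |z.im * (z+1).arg| := le_abs_self _
        _ = |z.im| * |(z+1).arg| := abs_mul _ _
        _ ≤ _ := by gcongr
    calc _ ≤ Real.exp (-2 * ((z + 1) * Complex.log (z + 1))).re *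
            (γ * Real.exp (-Real.pi * |z.im|)) := by gcongr; exact hbound z hz
      _ = γ * Real.exp ((-2 * ((z + 1) * Complex.log (z + 1))).re - Real.pi * |z.im|) := by
          rw [sub_eq_add_neg, Real.exp_add, neg_mul Real.pi]; ring
      _ ≤ _ := by
          gcongr
          simp [Complex.log_re, Complex.log_im]
          linarith
  have hlog : ∀ z : ℂ, 0 ≤ z.re → 0 ≤ Real.log ‖z + 1‖ := by
    intro z hz
    apply Real.log_nonneg
    have := Complex.re_le_norm (z + 1)
    simp at this
    linarith
  have hb : ∀ z : ℂ, 0 ≤ z.re → ‖e z • h z‖ ≤ γ := by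
    intro z hz
    refine (hre z hz).trans ?_
    have h3 : Real.exp (-2 * ((z.re + 1) * Real.log ‖z + 1‖)) ≤ 1 := by
      rw [Real.exp_le_one_iff]
      have : 0 ≤ (z.re + 1) * Real.log ‖z + 1‖ := mul_nonneg (by linarith) (hlog z hz)
      linarith
    nlinarith
  have key : Set.EqOn (fun z => e z • h z) 0 {z : ℂ | 0 ≤ z.re} := by
    apply PhragmenLindelof.eq_zero_on_right_half_plane_of_superexponential_decay
    · refine ⟨fun z hz => ?_, ?_⟩
      · exact (hed z (le_of_lt hz)).differentiableWithinAt.smul (hdiff z hz)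
      · rw [Complex.closure_setOfPred_lt_re]
        exact ContinuousOn.smul
          (fun z hz => (hed z hz).continuousAt.continuousWithinAt) hcont
    · refine ⟨0, by norm_num, 0, ?_⟩
      refine IsBigO.of_bound γ ?_
      refine Filter.eventually_inf_principal.2 (Eventually.of_forall fun z hz => ?_)
      simpa using hb z (le_of_lt hz)
    · intro n
      have hlim : Tendsto (fun x : ℝ => γ * Real.exp (-x)) atTop (nhds 0) := by
        simpa using (Real.tendsto_exp_neg_atTop_nhds_zero).const_mul γ
      refine squeeze_zero' (Eventually.of_forall fun x => by positivity) ?_ hlim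
      filter_upwards [eventually_ge_atTop (0:ℝ),
        Real.tendsto_log_atTop.eventually_ge_atTop ((n:ℝ) + 1)] with x hx hl
      have h1 := hre (x:ℂ) (by simpa using hx)
      have hn : ‖(x:ℂ) + 1‖ = x + 1 := by
        rw [← Complex.ofReal_one, ← Complex.ofReal_add, Complex.norm_real, Real.norm_of_nonneg]
        linarith
      rw [hn, Complex.ofReal_re] at h1
      have hx0 : 0 < x := by
        rcases hx.eq_or_lt with h0 | h0
        · rw [← h0] at hl
          simp at hl
          have : (0:ℝ) ≤ n := by positivity
          linarith
        · exact h0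
      have h4 : (n:ℝ) + 1 ≤ Real.log (x + 1) :=
        hl.trans (Real.log_le_log hx0 (by linarith))
      calc _ ≤ Real.exp x ^ n * (γ * Real.exp (-2 * ((x + 1) * Real.log (x + 1)))) := by
              gcongr
        _ = γ * Real.exp (n * x + -2 * ((x + 1) * Real.log (x + 1))) := by
              rw [Real.exp_add, Real.exp_nat_mul]; ring
        _ ≤ _ := by
              gcongr
              have hn0 : (0:ℝ) ≤ n := by positivity
              nlinarith [mul_le_mul_of_nonneg_left h4 (by linarith : 0 ≤ x + 1),
                mul_nonneg hn0 hx]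
    · exact ⟨γ, fun x => hb _ (by simp)⟩
  intro z hz
  have := key hz
  simp only [Pi.zero_apply, smul_eq_zero] at this
  exact this.resolve_left (Complex.exp_ne_zero _)
end
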